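/- arXiv:2012.08170 — 12 statements merged into one kernel-verified Lean document; each statement's English description precedes it below -/
import Mathlib

section
/- Let f : ℝ^n × ℝ^m → ℝ^n, and let F_x : (ℝ^m)^{r+1} → ℝ^n and F_u : (ℝ^m)^{r+1} → ℝ^m be maps such that for every sequence y : ℤ → ℝ^m, the sequences x(k) := F_x(y(k), y(k+1), …, y(k+r)) and u(k) := F_u(y(k), y(k+1), …, y(k+r)) satisfy x(k+1) = f(x(k), u(k)) for all k ∈ ℤ. Then F_x does not depend on its last argument: F_x(a_0, …, a_{r-1}, a) = F_x(a_0, …, a_{r-1}, b) for all a_0, …, a_{r-1}, a, b ∈ ℝ^m. -/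
/-- If `F_x, F_u` (depending on `r+1` consecutive values of an arbitrary
sequence `y`) parameterize solutions of `x(k+1) = f(x(k), u(k))`, then `F_x` does not
depend on its last argument. -/
theorem statement0 (n m r : ℕ)
    (f : (Fin n → ℝ) × (Fin m → ℝ) → (Fin n → ℝ))
    (Fx : (Fin (r + 1) → Fin m → ℝ) → (Fin n → ℝ))
    (Fu : (Fin (r + 1) → Fin m → ℝ) → (Fin m → ℝ))
    (hsol : ∀ y : ℤ → Fin m → ℝ, ∀ k : ℤ,
      Fx (fun i => y (k + 1 + (i : ℕ))) =
        f (Fx (fun i => y (k + (i : ℕ))), Fu (fun i => y (k + (i : ℕ))))) :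
    ∀ (Y : Fin r → Fin m → ℝ) (a b : Fin m → ℝ),
      Fx (Fin.snoc Y a) = Fx (Fin.snoc Y b) := by
  intro Y a b
  -- The sequence `…, 0, Y 0, …, Y (r-1), c, 0, …` with `Y 0` at time `0`. By the recursion at
  -- `k = -1`, the state at time `0` is determined by the window at times `-1, …, r-1`,
  -- which does not contain `c`.
  let y : (Fin m → ℝ) → ℤ → Fin m → ℝ := fun c j =>
    if h : 0 ≤ j ∧ j < r then Y ⟨j.toNat, by omega⟩ else if j = r then c else 0
  have window_zero : ∀ c, (fun i : Fin (r + 1) => y c (-1 + 1 + (i : ℕ))) = Fin.snoc Y c := by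
    intro c
    funext i
    refine Fin.lastCases ?_ (fun j => ?_) i
    · simp [y]
    · simp [y]
  have window_neg_one : (fun i : Fin (r + 1) => y a (-1 + (i : ℕ))) =
      fun i : Fin (r + 1) => y b (-1 + (i : ℕ)) := by
    funext i
    have hi : (-1 + ((i : ℕ) : ℤ)) ≠ r := by omega
    simp only [y, if_neg hi]
  rw [← window_zero a, ← window_zero b, hsol (y a) (-1), hsol (y b) (-1), window_neg_one]
end

section
/- Let f : ℝ^n × ℝ^m → ℝ^n, and let F_x : (ℝ^m)^r → ℝ^n and F_u : (ℝ^m)^{r+1} → ℝ^m be maps such that for every sequence y : ℤ → ℝ^m, the sequences x(k) := F_x(y(k), …, y(k+r-1)) and u(k) := F_u(y(k), …, y(k+r)) satisfy x(k+1) = f(x(k), u(k)) for all k ∈ ℤ. Let (x_i, u_i) and (x_f, u_f) be two points of ℝ^n × ℝ^m each lying in the range of the map (Y, v) ↦ (F_x(Y), F_u(Y, v)), and let k_i, k_f ∈ ℤ with k_f ≥ k_i + r + 1. Then there exists a solution (x, u) of the system with x(k_i) = x_i, u(k_i) = u_i, x(k_f) = x_f and u(k_f) = u_f. -/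
/-! The values of the parameterizing sequence `y` are completely free, and the state/input pair at
time `k` depends only on the window `y(k), …, y(k+r)`. Since `k_f ≥ k_i + r + 1`, the windows at `k_i`
and `k_f` are disjoint, so one sequence can take prescribed values on both
(`exists_seq_two_windows`); the solution it generates connects the two points. -/

/-- Values of a sequence can be prescribed independently on two disjoint windows of length `r + 1`. -/
theorem exists_seq_two_windows {α : Type*} (r : ℕ) (A B : Fin (r + 1) → α)
    (ki kf : ℤ) (hk : kf ≥ ki + r + 1) :
    ∃ y : ℤ → α, (∀ i : Fin (r + 1), y (ki + (i : ℕ)) = A i) ∧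
      ∀ i : Fin (r + 1), y (kf + (i : ℕ)) = B i := by
  -- `Fin.ofNat` reduces modulo `r + 1`; only its values inside the two windows matter.
  refine ⟨fun k => if k < kf then A (Fin.ofNat (r + 1) (k - ki).toNat)
    else B (Fin.ofNat (r + 1) (k - kf).toNat), fun i => ?_, fun i => ?_⟩
  · have h : ki + ((i : ℕ) : ℤ) < kf := by omega
    simp [h]
  · simp

/-- Trajectory planning for flat systems: any two state/input pairs in the
range of the parameterization `(Y, v) ↦ (F_x Y, F_u (Y, v))` can be connected by a
solution of `x(k+1) = f(x(k), u(k))`, provided `k_f ≥ k_i + r + 1`. -/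
theorem statement2 (n m r : ℕ)
    (f : (Fin n → ℝ) × (Fin m → ℝ) → (Fin n → ℝ))
    (Fx : (Fin r → Fin m → ℝ) → (Fin n → ℝ))
    (Fu : (Fin (r + 1) → Fin m → ℝ) → (Fin m → ℝ))
    (hsol : ∀ y : ℤ → Fin m → ℝ, ∀ k : ℤ,
      Fx (fun i => y (k + 1 + (i : ℕ))) =
        f (Fx (fun i => y (k + (i : ℕ))), Fu (fun i => y (k + (i : ℕ)))))
    (xi : Fin n → ℝ) (ui : Fin m → ℝ) (xf : Fin n → ℝ) (uf : Fin m → ℝ)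
    (hi : (xi, ui) ∈ Set.range (fun Yv : (Fin r → Fin m → ℝ) × (Fin m → ℝ) =>
      (Fx Yv.1, Fu (Fin.snoc Yv.1 Yv.2))))
    (hf : (xf, uf) ∈ Set.range (fun Yv : (Fin r → Fin m → ℝ) × (Fin m → ℝ) =>
      (Fx Yv.1, Fu (Fin.snoc Yv.1 Yv.2))))
    (ki kf : ℤ) (hk : kf ≥ ki + r + 1) :
    ∃ (x : ℤ → Fin n → ℝ) (u : ℤ → Fin m → ℝ),
      (∀ k : ℤ, x (k + 1) = f (x k, u k)) ∧
      x ki = xi ∧ u ki = ui ∧ x kf = xf ∧ u kf = uf := by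
  obtain ⟨⟨Yi, vi⟩, hi⟩ := hi
  obtain ⟨⟨Yf, vf⟩, hf⟩ := hf
  simp only [Prod.mk.injEq] at hi hf
  obtain ⟨rfl, rfl⟩ := hi
  obtain ⟨rfl, rfl⟩ := hf
  obtain ⟨y, hyi, hyf⟩ := exists_seq_two_windows r
    (Fin.snoc Yi vi : Fin (r + 1) → Fin m → ℝ) (Fin.snoc Yf vf) ki kf hk
  refine ⟨fun k => Fx (fun i => y (k + (i : ℕ))), fun k => Fu (fun i => y (k + (i : ℕ))),
    hsol y, congrArg Fx (funext fun i => ?_), congrArg Fu (funext hyi),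
    congrArg Fx (funext fun i => ?_), congrArg Fu (funext hyf)⟩
  · simpa using hyi i.castSucc
  · simpa using hyf i.castSucc
end

section
/- Let f : ℝ^n × ℝ^m → ℝ^n, and let F_x : (ℝ^m)^r → ℝ^n and F_u : (ℝ^m)^{r+1} → ℝ^m be maps such that for every sequence y : ℤ → ℝ^m, the sequences x(k) := F_x(y(k), …, y(k+r-1)) and u(k) := F_u(y(k), …, y(k+r)) satisfy x(k+1) = f(x(k), u(k)) for all k ∈ ℤ, and assume F_x is surjective onto ℝ^n. Then the system is reachable: for every x_i, x_f ∈ ℝ^n and every N ≥ r there exists a solution (x, u) with x(0) = x_i and x(N) = x_f. -/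
/-- A system admitting a parameterizing map whose state part `F_x` is
surjective is reachable: any initial state can be steered to any final state in any
number `N ≥ r` of steps. -/
theorem statement3 (n m r : ℕ)
    (f : (Fin n → ℝ) × (Fin m → ℝ) → (Fin n → ℝ))
    (Fx : (Fin r → Fin m → ℝ) → (Fin n → ℝ))
    (Fu : (Fin (r + 1) → Fin m → ℝ) → (Fin m → ℝ))
    (hsol : ∀ y : ℤ → Fin m → ℝ, ∀ k : ℤ,
      Fx (fun i => y (k + 1 + (i : ℕ))) =
        f (Fx (fun i => y (k + (i : ℕ))), Fu (fun i => y (k + (i : ℕ)))))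
    (hsurj : Function.Surjective Fx) :
    ∀ (xi xf : Fin n → ℝ) (N : ℤ), N ≥ r →
      ∃ (x : ℤ → Fin n → ℝ) (u : ℤ → Fin m → ℝ),
        (∀ k : ℤ, x (k + 1) = f (x k, u k)) ∧ x 0 = xi ∧ x N = xf := by
  intro xi xf N hN
  obtain ⟨a, ha⟩ := hsurj xi
  obtain ⟨b, hb⟩ := hsurj xf
  -- `y` equals `a` on the window `[0, r)` and `b` on `[N, N + r)`; these windows are
  -- disjoint because `r ≤ N`, so both end states can be prescribed independently.
  let y : ℤ → Fin m → ℝ := fun k =>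
    if h : 0 ≤ k ∧ k < r then a ⟨k.toNat, by omega⟩
    else if h' : N ≤ k ∧ k < N + r then b ⟨(k - N).toNat, by omega⟩
    else 0
  refine ⟨fun k => Fx (fun i => y (k + (i : ℕ))), fun k => Fu (fun i => y (k + (i : ℕ))),
    hsol y, ?_, ?_⟩
  · rw [← ha]
    refine congrArg Fx (funext fun i => ?_)
    have hi := i.isLt
    simp [y]
  · rw [← hb]
    refine congrArg Fx (funext fun i => ?_)
    have hi := i.isLt
    have h1 : ¬ (0 ≤ N + (i : ℕ) ∧ N + (i : ℕ) < r) := by omega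
    have h2 : N ≤ N + (i : ℕ) ∧ N + (i : ℕ) < N + r := by omega
    simp only [y, dif_neg h1, dif_pos h2]
    congr 1
    ext
    simp
end

section
/- Let T > 0 and let (x, u) : ℤ → ℝ³ × ℝ² be a solution of the product system x¹(k+1) = x¹(k) + T·u¹(k), x²(k+1) = x²(k) + T·u²(k), x³(k+1) = x³(k) + T·u¹(k)·u²(k). Define y¹(k) := x¹(k) − T·u¹(k−1) and y²(k) := x³(k) − x²(k)·u¹(k−1). Then for all k ∈ ℤ: (i) y¹(k+1) = x¹(k); (ii) y¹(k) − 2·y¹(k+1) + y¹(k+2) = T·(u¹(k) − u¹(k−1)); and (iii) whenever u¹(k) ≠ u¹(k−1), one has u¹(k−1) = (y¹(k+1) − y¹(k))/T, u¹(k) = (y¹(k+2) − y¹(k+1))/T, x²(k) = T·(y²(k) − y²(k+1))/(y¹(k) − 2·y¹(k+1) + y¹(k+2)), and x³(k) = (y¹(k)·y²(k+1) − y¹(k+1)·y²(k) − y¹(k+1)·y²(k+1) + y¹(k+2)·y²(k))/(y¹(k) − 2·y¹(k+1) + y¹(k+2)). -/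
/-- For any solution of the product system, the flat output
`y¹ = x¹ − T·u¹₍₋₁₎`, `y² = x³ − x²·u¹₍₋₁₎` satisfies the stated identities, and
(whenever `u¹(k) ≠ u¹(k−1)`) the states and inputs are parameterized by `y` and its
forward shifts. -/
theorem statement4 (T : ℝ) (hT : 0 < T)
    (x1 x2 x3 u1 u2 : ℤ → ℝ)
    (h1 : ∀ k : ℤ, x1 (k + 1) = x1 k + T * u1 k)
    (h2 : ∀ k : ℤ, x2 (k + 1) = x2 k + T * u2 k)
    (h3 : ∀ k : ℤ, x3 (k + 1) = x3 k + T * (u1 k * u2 k))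
    (y1 y2 : ℤ → ℝ)
    (hy1 : ∀ k : ℤ, y1 k = x1 k - T * u1 (k - 1))
    (hy2 : ∀ k : ℤ, y2 k = x3 k - x2 k * u1 (k - 1)) :
    ∀ k : ℤ,
      y1 (k + 1) = x1 k ∧
      y1 k - 2 * y1 (k + 1) + y1 (k + 2) = T * (u1 k - u1 (k - 1)) ∧
      (u1 k ≠ u1 (k - 1) →
        u1 (k - 1) = (y1 (k + 1) - y1 k) / T ∧
        u1 k = (y1 (k + 2) - y1 (k + 1)) / T ∧
        x2 k = T * (y2 k - y2 (k + 1)) / (y1 k - 2 * y1 (k + 1) + y1 (k + 2)) ∧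
        x3 k = (y1 k * y2 (k + 1) - y1 (k + 1) * y2 k - y1 (k + 1) * y2 (k + 1)
                  + y1 (k + 2) * y2 k) / (y1 k - 2 * y1 (k + 1) + y1 (k + 2))) := by
  intro k
  have a0 : y1 k = x1 k - T * u1 (k - 1) := hy1 k
  have a1 : y1 (k + 1) = x1 k := by
    rw [hy1, h1, add_sub_cancel_right]; ring
  have a2 : y1 (k + 2) = x1 k + T * u1 k := by
    rw [hy1, show k + 2 = k + 1 + 1 by ring, h1 (k + 1), h1 k, add_sub_cancel_right]; ring
  -- The `u2` terms cancel, so `y2 k` and `y2 (k + 1)` form a linear system in `x2 k`, `x3 k`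
  -- with determinant `u1 k - u1 (k - 1)` up to sign.
  have b1 : y2 (k + 1) = x3 k - x2 k * u1 k := by
    rw [hy2, h3, h2, add_sub_cancel_right]; ring
  have hden : y1 k - 2 * y1 (k + 1) + y1 (k + 2) = T * (u1 k - u1 (k - 1)) := by
    rw [a0, a1, a2]; ring
  refine ⟨a1, hden, fun hne => ?_⟩
  have hT0 : T ≠ 0 := hT.ne'
  have hD : T * (u1 k - u1 (k - 1)) ≠ 0 := mul_ne_zero hT0 (sub_ne_zero.mpr hne)
  refine ⟨?_, ?_, ?_, ?_⟩
  · rw [eq_div_iff hT0, a0, a1]; ring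
  · rw [eq_div_iff hT0, a1, a2]; ring
  · rw [hden, eq_div_iff hD, b1, hy2 k]; ring
  · rw [hden, eq_div_iff hD, a0, a1, a2, b1, hy2 k]; ring
end

section
/- Let T > 0 and let y = (y¹, y²) : ℤ → ℝ² be any sequence such that D(k) := y¹(k) − 2·y¹(k+1) + y¹(k+2) ≠ 0 for all k ∈ ℤ. Define x¹(k) := y¹(k+1), x²(k) := T·(y²(k) − y²(k+1))/D(k), x³(k) := (y¹(k)·y²(k+1) − y¹(k+1)·y²(k) − y¹(k+1)·y²(k+1) + y¹(k+2)·y²(k))/D(k), u¹(k) := (y¹(k+2) − y¹(k+1))/T, and u²(k) := (x²(k+1) − x²(k))/T. Then (x, u) is a solution of the product system, i.e., for all k ∈ ℤ: x¹(k+1) = x¹(k) + T·u¹(k), x²(k+1) = x²(k) + T·u²(k), and x³(k+1) = x³(k) + T·u¹(k)·u²(k). -/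
/-- Every sequence `y` with nonvanishing second difference of `y¹`
parameterizes, via the given formulas, a solution of the product system. -/
theorem statement5 (T : ℝ) (hT : 0 < T)
    (y1 y2 : ℤ → ℝ)
    (hD : ∀ k : ℤ, y1 k - 2 * y1 (k + 1) + y1 (k + 2) ≠ 0)
    (x1 x2 x3 u1 u2 : ℤ → ℝ)
    (hx1 : ∀ k : ℤ, x1 k = y1 (k + 1))
    (hx2 : ∀ k : ℤ, x2 k = T * (y2 k - y2 (k + 1)) / (y1 k - 2 * y1 (k + 1) + y1 (k + 2)))
    (hx3 : ∀ k : ℤ, x3 k = (y1 k * y2 (k + 1) - y1 (k + 1) * y2 k - y1 (k + 1) * y2 (k + 1)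
        + y1 (k + 2) * y2 k) / (y1 k - 2 * y1 (k + 1) + y1 (k + 2)))
    (hu1 : ∀ k : ℤ, u1 k = (y1 (k + 2) - y1 (k + 1)) / T)
    (hu2 : ∀ k : ℤ, u2 k = (x2 (k + 1) - x2 k) / T) :
    ∀ k : ℤ,
      x1 (k + 1) = x1 k + T * u1 k ∧
      x2 (k + 1) = x2 k + T * u2 k ∧
      x3 (k + 1) = x3 k + T * (u1 k * u2 k) := by
  intro k
  have hT' : T ≠ 0 := hT.ne'
  have e1 : k + 1 + 1 = k + 2 := by ring
  refine ⟨?_, ?_, ?_⟩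
  · rw [hx1, hx1, hu1, e1]
    field_simp
    ring
  · rw [hu2]
    field_simp
    ring
  · -- Both `x³(k)` and `x³(k+1)` are `y²(k+1) + u¹(k) * x²` at the respective time,
    -- so their difference is `u¹(k) * (x²(k+1) - x²(k)) = T * u¹(k) * u²(k)`.
    have h0 : x3 k = y2 (k + 1) + u1 k * x2 k := by
      have hDk := hD k
      rw [hx3, hx2, hu1]
      generalize hE : y1 k - 2 * y1 (k + 1) + y1 (k + 2) = E at hDk ⊢
      field_simp
      rw [← hE]
      ring
    have h1 : x3 (k + 1) = y2 (k + 1) + u1 k * x2 (k + 1) := by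
      have hDk := hD (k + 1)
      rw [hx3, hx2, hu1]
      rw [e1] at hDk ⊢
      generalize hE : y1 (k + 1) - 2 * y1 (k + 2) + y1 (k + 1 + 2) = E at hDk ⊢
      field_simp
      rw [← hE]
      ring
    rw [h0, h1, hu2]
    field_simp
    ring
end

section
/- Let (x, u) : ℤ → ℝ³ × ℝ² be a solution of the system x¹(k+1) = u¹(k), x²(k+1) = u²(k), x³(k+1) = x³(k) + x¹(k)·u²(k) + x²(k)·u¹(k). Define y¹(k) := x¹(k−1) and y²(k) := x³(k) − x²(k)·x¹(k−1). Then for all k ∈ ℤ: (i) y¹(k+1) = x¹(k) and y¹(k+2) = u¹(k); (ii) y²(k+1) = x³(k) + x²(k)·u¹(k); and (iii) whenever x¹(k−1) + u¹(k) ≠ 0 and x¹(k) + u¹(k+1) ≠ 0, one has x²(k) = (y²(k+1) − y²(k))/(y¹(k+2) + y¹(k)), x³(k) = (y¹(k)·y²(k+1) + y¹(k+2)·y²(k))/(y¹(k) + y¹(k+2)), and u²(k) = (y²(k+2) − y²(k+1))/(y¹(k+3) + y¹(k+1)). -/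
/-- For any solution of the Brockett-type system, the flat output
`y¹ = x¹₍₋₁₎`, `y² = x³ − x²·x¹₍₋₁₎` satisfies the stated identities, and (under the
stated nonvanishing conditions) the states and inputs are parameterized by `y` and its
forward shifts. -/
theorem statement6 (x1 x2 x3 u1 u2 : ℤ → ℝ)
    (h1 : ∀ k : ℤ, x1 (k + 1) = u1 k)
    (h2 : ∀ k : ℤ, x2 (k + 1) = u2 k)
    (h3 : ∀ k : ℤ, x3 (k + 1) = x3 k + x1 k * u2 k + x2 k * u1 k)
    (y1 y2 : ℤ → ℝ)
    (hy1 : ∀ k : ℤ, y1 k = x1 (k - 1))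
    (hy2 : ∀ k : ℤ, y2 k = x3 k - x2 k * x1 (k - 1)) :
    ∀ k : ℤ,
      (y1 (k + 1) = x1 k ∧ y1 (k + 2) = u1 k) ∧
      y2 (k + 1) = x3 k + x2 k * u1 k ∧
      (x1 (k - 1) + u1 k ≠ 0 → x1 k + u1 (k + 1) ≠ 0 →
        x2 k = (y2 (k + 1) - y2 k) / (y1 (k + 2) + y1 k) ∧
        x3 k = (y1 k * y2 (k + 1) + y1 (k + 2) * y2 k) / (y1 k + y1 (k + 2)) ∧
        u2 k = (y2 (k + 2) - y2 (k + 1)) / (y1 (k + 3) + y1 (k + 1))) := by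
  have a1 : ∀ k, y1 (k + 1) = x1 k := fun k => by rw [hy1, add_sub_cancel_right]
  have a2 : ∀ k, y1 (k + 2) = u1 k := fun k => by
    rw [show k + 2 = (k + 1) + 1 by ring, a1, h1]
  -- The term `x1 k * u2 k` of the dynamics cancels against `x2 (k + 1) * x1 k`.
  have b : ∀ k, y2 (k + 1) = x3 k + x2 k * u1 k := fun k => by
    rw [hy2, add_sub_cancel_right, h2, h3]; ring
  -- `x2` is the quotient of the difference of `y2` by `y1 (k + 2) + y1 k`; the formula for
  -- `u2 k = x2 (k + 1)` is its forward shift.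
  have c : ∀ k, x1 (k - 1) + u1 k ≠ 0 →
      x2 k = (y2 (k + 1) - y2 k) / (y1 (k + 2) + y1 k) := fun k hk => by
    rw [b, hy2, a2, hy1, eq_div_iff (by rwa [add_comm])]; ring
  intro k
  refine ⟨⟨a1 k, a2 k⟩, b k, fun hk hk' => ⟨c k hk, ?_, ?_⟩⟩
  · rw [b, hy2, a2, hy1, eq_div_iff hk]; ring
  · have h := c (k + 1) (by rwa [add_sub_cancel_right])
    rwa [h2, show k + 1 + 1 = k + 2 by ring, show k + 1 + 2 = k + 3 by ring] at h
end

section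
/- Let y = (y¹, y²) : ℤ → ℝ² be any sequence such that y¹(k) + y¹(k+2) ≠ 0 for all k ∈ ℤ. Define x¹(k) := y¹(k+1), x²(k) := (y²(k+1) − y²(k))/(y¹(k+2) + y¹(k)), x³(k) := (y¹(k)·y²(k+1) + y¹(k+2)·y²(k))/(y¹(k) + y¹(k+2)), u¹(k) := y¹(k+2), and u²(k) := (y²(k+2) − y²(k+1))/(y¹(k+3) + y¹(k+1)). Then (x, u) is a solution of the Brockett-type system, i.e., for all k ∈ ℤ: x¹(k+1) = u¹(k), x²(k+1) = u²(k), and x³(k+1) = x³(k) + x¹(k)·u²(k) + x²(k)·u¹(k). -/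
/-- Every sequence `y` with `y¹(k) + y¹(k+2)` never vanishing
parameterizes, via the given formulas, a solution of the Brockett-type system. -/
theorem statement7 (y1 y2 : ℤ → ℝ)
    (hD : ∀ k : ℤ, y1 k + y1 (k + 2) ≠ 0)
    (x1 x2 x3 u1 u2 : ℤ → ℝ)
    (hx1 : ∀ k : ℤ, x1 k = y1 (k + 1))
    (hx2 : ∀ k : ℤ, x2 k = (y2 (k + 1) - y2 k) / (y1 (k + 2) + y1 k))
    (hx3 : ∀ k : ℤ, x3 k = (y1 k * y2 (k + 1) + y1 (k + 2) * y2 k) / (y1 k + y1 (k + 2)))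
    (hu1 : ∀ k : ℤ, u1 k = y1 (k + 2))
    (hu2 : ∀ k : ℤ, u2 k = (y2 (k + 2) - y2 (k + 1)) / (y1 (k + 3) + y1 (k + 1))) :
    ∀ k : ℤ,
      x1 (k + 1) = u1 k ∧
      x2 (k + 1) = u2 k ∧
      x3 (k + 1) = x3 k + x1 k * u2 k + x2 k * u1 k := by
  intro k
  have e2 : k + 1 + 1 = k + 2 := by ring
  have e3 : k + 1 + 2 = k + 3 := by ring
  have h0 := hD k
  have h1 := hD (k + 1)
  rw [e3] at h1
  refine ⟨by rw [hx1, hu1, e2], by rw [hx2, hu2, e2, e3], ?_⟩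
  -- Both sides of the recursion are `y2 (k + 1)` plus the same increment.
  have hleft : x3 k + x2 k * u1 k = y2 (k + 1) := by
    rw [hx3, hx2, hu1, add_comm (y1 (k + 2)) (y1 k)]
    field_simp
    ring
  have hright : x3 (k + 1) = y2 (k + 1) + x1 k * u2 k := by
    rw [hx3, hx1, hu2, e2, e3, add_comm (y1 (k + 3)) (y1 (k + 1))]
    field_simp
    ring
  linarith
end

section
/- For every T > 0 the product system is reachable: for all x_i, x_f ∈ ℝ³ there exist N ≥ 1 and inputs u(0), …, u(N−1) ∈ ℝ² such that the state sequence defined by x(0) = x_i and the recursions x¹(k+1) = x¹(k) + T·u¹(k), x²(k+1) = x²(k) + T·u²(k), x³(k+1) = x³(k) + T·u¹(k)·u²(k) satisfies x(N) = x_f. -/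
/-- For every `T > 0` the product system is reachable: any final state can
be reached from any initial state in finitely many steps. -/
theorem statement8 (T : ℝ) (hT : 0 < T) (xi xf : ℝ × ℝ × ℝ) :
    ∃ (N : ℕ), 1 ≤ N ∧ ∃ (u1 u2 : ℕ → ℝ) (x1 x2 x3 : ℕ → ℝ),
      (x1 0, x2 0, x3 0) = xi ∧
      (∀ k < N, x1 (k + 1) = x1 k + T * u1 k ∧
                x2 (k + 1) = x2 k + T * u2 k ∧
                x3 (k + 1) = x3 k + T * (u1 k * u2 k)) ∧
      (x1 N, x2 N, x3 N) = xf := by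
  obtain ⟨a, b, c⟩ := xi
  obtain ⟨a', b', c'⟩ := xf
  have hT0 : T ≠ 0 := hT.ne'
  -- Moving `x¹` alone and then `x²` alone leaves `x³` unchanged. The opposite inputs `(1, s)` and
  -- `(-1, -s)` cancel in `x¹` and `x²` but together add `2 T s` to `x³`, so `s = (c' - c) / (2 T)`.
  let s : ℝ := (c' - c) / (2 * T)
  let u1 : ℕ → ℝ := fun k => match k with
    | 0 => (a' - a) / T
    | 1 => 0
    | 2 => 1
    | _ => -1
  let u2 : ℕ → ℝ := fun k => match k with
    | 0 => 0
    | 1 => (b' - b) / T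
    | 2 => s
    | _ => -s
  refine ⟨4, by norm_num, u1, u2,
    fun n => a + ∑ k ∈ Finset.range n, T * u1 k,
    fun n => b + ∑ k ∈ Finset.range n, T * u2 k,
    fun n => c + ∑ k ∈ Finset.range n, T * (u1 k * u2 k), by simp, ?_, ?_⟩
  · intro k _
    simp only [Finset.sum_range_succ, add_assoc, and_self]
  · simp only [Finset.sum_range_succ, Finset.sum_range_zero, Prod.mk.injEq, u1, u2, s]
    refine ⟨?_, ?_, ?_⟩ <;> field_simp <;> ring
end

section
/- The Brockett-type system is reachable: for all x_i, x_f ∈ ℝ³ there exist N ≥ 1 and inputs u(0), …, u(N−1) ∈ ℝ² such that the state sequence defined by x(0) = x_i and the recursions x¹(k+1) = u¹(k), x²(k+1) = u²(k), x³(k+1) = x³(k) + x¹(k)·u²(k) + x²(k)·u¹(k) satisfies x(N) = x_f. -/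
/-- The Brockett-type system is reachable: any final state can be reached
from any initial state in finitely many steps. -/
theorem statement9 (xi xf : ℝ × ℝ × ℝ) :
    ∃ (N : ℕ), 1 ≤ N ∧ ∃ (u1 u2 : ℕ → ℝ) (x1 x2 x3 : ℕ → ℝ),
      (x1 0, x2 0, x3 0) = xi ∧
      (∀ k < N, x1 (k + 1) = u1 k ∧
                x2 (k + 1) = u2 k ∧
                x3 (k + 1) = x3 k + x1 k * u2 k + x2 k * u1 k) ∧
      (x1 N, x2 N, x3 N) = xf := by
  obtain ⟨a, b, c⟩ := xi
  obtain ⟨p, q, r⟩ := xf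
  -- Steer `(x¹, x²)` along `(a, b) → (0, 0) → (r - c, 0) → (0, 1) → (0, 0) → (p, q)`: only the
  -- third step changes `x³`, and it adds exactly `(r - c) * 1 + 0 * 0 = r - c`.
  let y1 : ℕ → ℝ := fun k => [a, 0, r - c, 0, 0, p].getD k 0
  let y2 : ℕ → ℝ := fun k => [b, 0, 0, 1, 0, q].getD k 0
  let y3 : ℕ → ℝ := fun k => [c, c, c, r, r, r].getD k 0
  refine ⟨5, by norm_num, fun k => y1 (k + 1), fun k => y2 (k + 1), y1, y2, y3, rfl, ?_, rfl⟩
  intro k hk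
  refine ⟨rfl, rfl, ?_⟩
  interval_cases k <;> simp [y1, y2, y3]
end

section
/- Let T > 0. Define Φ : ℝ⁵ → ℝ⁵ by Φ(a₀, a₁, a₂, b₀, b₁) = (x¹, x², x³, z¹, z²) with x¹ = a₁, x² = T·(b₀ − b₁)/D, x³ = (a₀·b₁ − a₁·b₀ − a₁·b₁ + a₂·b₀)/D, z¹ = a₀, z² = a₂, where D = a₀ − 2a₁ + a₂. Define the closed-loop map G : ℝ⁵ × ℝ² → ℝ⁵ by G((x¹,x²,x³,z¹,z²),(v¹,v²)) = (x¹ + T·u¹, x² + T·u², x³ + T·u¹·u², x¹, v¹), where u¹ = (z² − x¹)/T and u² = ((x³ − v²)·T − x²·(v¹ − z²))/((x¹ − 2z² + v¹)·T). Then for all a₀, a₁, a₂, a₃, b₀, b₁, b₂ ∈ ℝ with a₀ − 2a₁ + a₂ ≠ 0 and a₁ − 2a₂ + a₃ ≠ 0, one has G(Φ(a₀, a₁, a₂, b₀, b₁), (a₃, b₂)) = Φ(a₁, a₂, a₃, b₁, b₂). -/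
/-- The state transformation `Φ` built from the flat-output parameterization of the
product system (Example 1 of the paper). -/
noncomputable def PhiProd (T : ℝ) : ℝ × ℝ × ℝ × ℝ × ℝ → ℝ × ℝ × ℝ × ℝ × ℝ :=
  fun p =>
    match p with
    | (a0, a1, a2, b0, b1) =>
      (a1,
       T * (b0 - b1) / (a0 - 2 * a1 + a2),
       (a0 * b1 - a1 * b0 - a1 * b1 + a2 * b0) / (a0 - 2 * a1 + a2),
       a0,
       a2)

/-- The closed-loop map of the product system under the dynamic feedback constructed in
the paper. -/
noncomputable def GProd (T : ℝ) : (ℝ × ℝ × ℝ × ℝ × ℝ) → (ℝ × ℝ) → ℝ × ℝ × ℝ × ℝ × ℝ :=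
  fun p v =>
    match p, v with
    | (x1, x2, x3, z1, z2), (v1, v2) =>
      (x1 + T * ((z2 - x1) / T),
       x2 + T * (((x3 - v2) * T - x2 * (v1 - z2)) / ((x1 - 2 * z2 + v1) * T)),
       x3 + T * (((z2 - x1) / T) * (((x3 - v2) * T - x2 * (v1 - z2)) / ((x1 - 2 * z2 + v1) * T))),
       x1,
       v1)

/-- `Φ` conjugates the Brunovsky shift-register dynamics to the
closed-loop dynamics of the product system under the linearizing dynamic feedback. -/
theorem statement10 (T : ℝ) (hT : 0 < T) (a0 a1 a2 a3 b0 b1 b2 : ℝ)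
    (hD0 : a0 - 2 * a1 + a2 ≠ 0) (hD1 : a1 - 2 * a2 + a3 ≠ 0) :
    GProd T (PhiProd T (a0, a1, a2, b0, b1)) (a3, b2) = PhiProd T (a1, a2, a3, b1, b2) := by
  have hT0 : T ≠ 0 := hT.ne'
  simp only [GProd, PhiProd, Prod.mk.injEq, and_true]
  -- Taking the two denominators as coordinates in place of `a0` and `a3` reduces each
  -- component to an identity of rational functions with monomial denominators.
  generalize hD : a0 - 2 * a1 + a2 = D at *
  generalize hE : a1 - 2 * a2 + a3 = E at *
  obtain rfl : a0 = D + 2 * a1 - a2 := by linarith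
  obtain rfl : a3 = E - a1 + 2 * a2 := by linarith
  clear hD hE
  refine ⟨?_, ?_, ?_⟩ <;> field_simp <;> ring
end

section
/- Let T > 0 and define Φ : ℝ⁵ → ℝ⁵ by Φ(a₀, a₁, a₂, b₀, b₁) = (a₁, T·(b₀ − b₁)/D, (a₀·b₁ − a₁·b₀ − a₁·b₁ + a₂·b₀)/D, a₀, a₂) with D = a₀ − 2a₁ + a₂. Then Φ restricts to a bijection from the set {(a₀, a₁, a₂, b₀, b₁) ∈ ℝ⁵ : a₀ − 2a₁ + a₂ ≠ 0} onto the set {(x¹, x², x³, z¹, z²) ∈ ℝ⁵ : z¹ − 2x¹ + z² ≠ 0}. -/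
/-- The inverse of `Φ`. With `D = z¹ - 2x¹ + z²`, the second and third components of `Φ` are a
linear system in `(b₀, b₁)`: `b₀ - b₁ = x² D / T` and `(z² - x¹) b₀ + (z¹ - x¹) b₁ = x³ D`.
Its solution is polynomial in the state, because `D` cancels. -/
noncomputable def PhiProdInv (T : ℝ) : ℝ × ℝ × ℝ × ℝ × ℝ → ℝ × ℝ × ℝ × ℝ × ℝ :=
  fun q =>
    match q with
    | (x1, x2, x3, z1, z2) =>
      (z1, x1, z2, x3 + x2 * (z1 - x1) / T, x3 - x2 * (z2 - x1) / T)

/-- `Φ` restricts to a bijection from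
`{(a₀,a₁,a₂,b₀,b₁) : a₀ − 2a₁ + a₂ ≠ 0}` onto `{(x¹,x²,x³,z¹,z²) : z¹ − 2x¹ + z² ≠ 0}`. -/
theorem statement11 (T : ℝ) (hT : 0 < T) :
    Set.BijOn (PhiProd T)
      {p : ℝ × ℝ × ℝ × ℝ × ℝ | p.1 - 2 * p.2.1 + p.2.2.1 ≠ 0}
      {q : ℝ × ℝ × ℝ × ℝ × ℝ | q.2.2.2.1 - 2 * q.1 + q.2.2.2.2 ≠ 0} := by
  have hT' : T ≠ 0 := hT.ne'
  refine Set.InvOn.bijOn (f' := PhiProdInv T) ⟨?_, ?_⟩ ?_ ?_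
  · rintro ⟨a0, a1, a2, b0, b1⟩ h
    simp only [Set.mem_ofPred_eq] at h
    simp only [PhiProd, PhiProdInv, Prod.mk.injEq, true_and]
    -- Eliminating `a2` in favour of `D` makes the denominator a single variable.
    generalize hD : a0 - 2 * a1 + a2 = D at h ⊢
    obtain rfl : a2 = D - a0 + 2 * a1 := by linarith
    constructor <;> field_simp <;> ring
  · rintro ⟨x1, x2, x3, z1, z2⟩ h
    simp only [Set.mem_ofPred_eq] at h
    simp only [PhiProd, PhiProdInv, Prod.mk.injEq, true_and, and_true]
    -- Eliminating `z2` in favour of `D` makes the denominator a single variable.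
    generalize hD : z1 - 2 * x1 + z2 = D at h ⊢
    obtain rfl : z2 = D - z1 + 2 * x1 := by linarith
    constructor <;> field_simp <;> ring
  · rintro ⟨a0, a1, a2, b0, b1⟩ h
    exact h
  · rintro ⟨x1, x2, x3, z1, z2⟩ h
    exact h
end

section
/- Let f : ℝ^n × ℝ^m → ℝ^n, r ≥ 1, and let F_x : (ℝ^m)^r → ℝ^n and F_u : (ℝ^m)^{r+1} → ℝ^m be maps such that for every sequence y : ℤ → ℝ^m, the sequences x(k) := F_x(y(k), …, y(k+r−1)) and u(k) := F_u(y(k), …, y(k+r)) satisfy x(k+1) = f(x(k), u(k)) for all k. Let p := m·r − n ≥ 0 and let F_z : (ℝ^m)^r → ℝ^p be such that Ψ := (F_x, F_z) : (ℝ^m)^r → ℝ^n × ℝ^p is a bijection with inverse Ψ⁻¹. Define the shift σ : (ℝ^m)^r × ℝ^m → (ℝ^m)^r by σ((Y₀, …, Y_{r−1}), v) = (Y₁, …, Y_{r−1}, v), and the feedback maps α(x, z, v) := F_z(σ(Ψ⁻¹(x, z), v)) and β(x, z, v) := F_u(Ψ⁻¹(x, z), v). Then for all (x, z) ∈ ℝ^n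 × ℝ^p and v ∈ ℝ^m, the closed-loop map satisfies (f(x, β(x, z, v)), α(x, z, v)) = Ψ(σ(Ψ⁻¹(x, z), v)); in particular, Ψ conjugates the closed-loop dynamics to the Brunovsky shift register σ. -/
/-!
Given `(x, z)` and `v`, put `Y = Ψ⁻¹(x, z)`, so that `F_x(Y) = x`. The finite window
`(Y₀, …, Y_{r-1}, v)` extends to a sequence `y` on all of `ℤ`, and the parameterization property
for `y` at time `0` reads `F_x(σ(Y, v)) = f(F_x(Y), F_u(Y, v)) = f(x, β(x, z, v))`, which is the
`x`-component of the claim. The `z`-component holds by the definition of `α`.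
-/

/-- The Brunovsky shift register `σ((Y₀,…,Y_{r−1}), v) = (Y₁,…,Y_{r−1}, v)`. -/
def shiftReg (m r : ℕ) (Y : Fin r → Fin m → ℝ) (v : Fin m → ℝ) : Fin r → Fin m → ℝ :=
  fun i => if h : (i : ℕ) + 1 < r then Y ⟨(i : ℕ) + 1, h⟩ else v

/-- Every flat system (admitting a parameterizing map `(F_x, F_u)` with
`Ψ = (F_x, F_z)` bijective) is linearized by the dynamic feedback
`z⁺ = α(x,z,v) = F_z(σ(Ψ⁻¹(x,z), v))`, `u = β(x,z,v) = F_u(Ψ⁻¹(x,z), v)`: the map `Ψ`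
conjugates the closed-loop dynamics to the Brunovsky shift register `σ`. -/
theorem statement12 (n m r p : ℕ) (hr : 1 ≤ r) (hn : n ≤ m * r) (hp : p = m * r - n)
    (f : (Fin n → ℝ) × (Fin m → ℝ) → (Fin n → ℝ))
    (Fx : (Fin r → Fin m → ℝ) → (Fin n → ℝ))
    (Fu : (Fin (r + 1) → Fin m → ℝ) → (Fin m → ℝ))
    (hsol : ∀ y : ℤ → Fin m → ℝ, ∀ k : ℤ,
      Fx (fun i => y (k + 1 + (i : ℕ))) =
        f (Fx (fun i => y (k + (i : ℕ))), Fu (fun i => y (k + (i : ℕ)))))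
    (Fz : (Fin r → Fin m → ℝ) → (Fin p → ℝ))
    (Ψinv : (Fin n → ℝ) × (Fin p → ℝ) → (Fin r → Fin m → ℝ))
    (hleft : ∀ Y : Fin r → Fin m → ℝ, Ψinv (Fx Y, Fz Y) = Y)
    (hright : ∀ q : (Fin n → ℝ) × (Fin p → ℝ), (Fx (Ψinv q), Fz (Ψinv q)) = q) :
    ∀ (x : Fin n → ℝ) (z : Fin p → ℝ) (v : Fin m → ℝ),
      (f (x, Fu (Fin.snoc (Ψinv (x, z)) v)), Fz (shiftReg m r (Ψinv (x, z)) v)) =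
        (Fx (shiftReg m r (Ψinv (x, z)) v), Fz (shiftReg m r (Ψinv (x, z)) v)) := by
  intro x z v
  have hx : Fx (Ψinv (x, z)) = x := congrArg Prod.fst (hright (x, z))
  generalize Ψinv (x, z) = Y at hx ⊢
  -- A bi-infinite sequence whose entries at times `0, …, r` are `Y₀, …, Y_{r-1}, v`;
  -- its values outside this window are irrelevant.
  let y : ℤ → Fin m → ℝ := fun j => if h : j.toNat < r then Y ⟨j.toNat, h⟩ else v
  have hY : (fun i : Fin r => y (0 + (i : ℕ))) = Y := by
    funext i
    simp [y]
  have hsnoc : (fun i : Fin (r + 1) => y (0 + (i : ℕ))) = Fin.snoc Y v := by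
    funext i
    simp only [y, zero_add, Int.toNat_natCast, Fin.snoc]
    rfl
  have hshift : (fun i : Fin r => y (0 + 1 + (i : ℕ))) = shiftReg m r Y v := by
    funext i
    have hi : (0 + 1 + ((i : ℕ) : ℤ)).toNat = (i : ℕ) + 1 := by omega
    simp only [y, shiftReg, hi]
  have key := hsol y 0
  rw [hY, hsnoc, hshift, hx] at key
  rw [key]
end
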